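/- Let m ≥ 2 be even, σ₀ = (−1)^{m/2}, L, T, τ > 0, and let f : ℝ → ℝ be C² with ‖f″‖_∞ := sup_ℝ |f″| < ∞. Let q = (q₀, …, q_{m−1}) be a C¹ solution, L-periodic in x, of ∂_t q₀ + ∂_x f(q₀) + σ₀ ∂_x q_{m−1} = 0, τ ∂_t q_j + σ₀ (−1)^j ∂_x q_{m−j−1} = σ₀ (−1)^j q_{m−j} for j ∈ {1, …, m/2 − 1}, and τ ∂_t q_j + σ₀ (−1)^{j+m−1} ∂_x q_{m−j−1} = σ₀ (−1)^{j+m−1} q_{m−j} for j ∈ {m/2, …, m−1}. Let q̄ = (q̄₀, …, q̄_{m−1}) be a C¹ tuple, L-periodic in x with ∂_x q̄₀ bounded, satisfying the same system except that the first equation carries a residual: ∂_t q̄₀ + ∂_x f(q̄₀) + σ₀ ∂_x q̄_{m−1} = τ R for some continuous R. Then the relative energy η(q, q̄)(t) = ∫₀^L ( ½ (q₀−q̄₀)² + (τ/2) Σ_{j=1}^{m−1} (q_j−q̄_j)² ) dx satisfies, for all t ∈ [0,T], d/dt η(q, q̄)(t) + ∫₀^L (q_{m/2}(t,x) − q̄_{m/2}(t,x))²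 dx ≤ ( ‖f″‖_∞ · sup |∂_x q̄₀| + 1 ) η(q, q̄)(t) + τ² ∫₀^L R(t,x)² dx. -/

import Mathlib

open MeasureTheory

/-- Partial derivative with respect to the first (time) variable. -/
noncomputable def pdt (u : ℝ → ℝ → ℝ) : ℝ → ℝ → ℝ :=
  fun t x => deriv (fun s => u s x) t

/-- Partial derivative with respect to the second (space) variable. -/
noncomputable def pdx (u : ℝ → ℝ → ℝ) : ℝ → ℝ → ℝ :=
  fun t x => deriv (fun y => u t y) x

/-!
Write `m = 2 n`. The equations `1 ≤ j < m` share the form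
`τ ∂ₜ qⱼ + εⱼ ∂ₓ q_{m-j-1} = εⱼ q_{m-j}` with signs `εⱼ = ±1`, and the linear part of the equation
`j = 0` fits the same pattern. The signs are even under the reflection `j ↦ m - j - 1`, so that
integration by parts cancels the transport terms in pairs. They are odd under `j ↦ m - j` off the
fixed point `j = n`, so that the relaxation terms also cancel in pairs and only the dissipation of
the component `n` is left. What remains is the flux in the equation `j = 0`: up to a total
derivative it is `∂ₓ q̄₀` times a second-order Taylor remainder of `f`, which the energy controls.
-/

section Calculus

variable {u v : ℝ → ℝ → ℝ}

theorem contDiff_slice {k : WithTop ℕ∞} (hu : ContDiff ℝ k (Function.uncurry u)) (t : ℝ) :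
    ContDiff ℝ k (u t) :=
  hu.comp (contDiff_prodMk_right t)

theorem hasDerivAt_pdt (hu : ContDiff ℝ 1 (Function.uncurry u)) (t x : ℝ) :
    HasDerivAt (fun s => u s x) (pdt u t x) t :=
  ((hu.comp (contDiff_prodMk_left x)).differentiable one_ne_zero t).hasDerivAt

theorem hasDerivAt_pdx (hu : ContDiff ℝ 1 (Function.uncurry u)) (t x : ℝ) :
    HasDerivAt (u t) (pdx u t x) x :=
  ((contDiff_slice hu t).differentiable one_ne_zero x).hasDerivAt

theorem pdt_sub (hu : ContDiff ℝ 1 (Function.uncurry u)) (hv : ContDiff ℝ 1 (Function.uncurry v))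
    (t x : ℝ) : pdt (u - v) t x = pdt u t x - pdt v t x :=
  ((hasDerivAt_pdt hu t x).sub (hasDerivAt_pdt hv t x)).deriv

theorem pdx_sub (hu : ContDiff ℝ 1 (Function.uncurry u)) (hv : ContDiff ℝ 1 (Function.uncurry v))
    (t x : ℝ) : pdx (u - v) t x = pdx u t x - pdx v t x :=
  ((hasDerivAt_pdx hu t x).sub (hasDerivAt_pdx hv t x)).deriv

theorem continuous_pdx (hu : ContDiff ℝ 1 (Function.uncurry u)) (t : ℝ) : Continuous (pdx u t) :=
  (contDiff_slice hu t).continuous_deriv le_rfl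

theorem continuous_uncurry_pdt (hu : ContDiff ℝ 1 (Function.uncurry u)) :
    Continuous (Function.uncurry (pdt u)) := by
  have h : Function.uncurry (pdt u) = fun p => fderiv ℝ (Function.uncurry u) p (1, 0) := by
    funext ⟨t, x⟩
    have hline : HasDerivAt (fun s : ℝ => (s, x)) (1, 0) t :=
      (hasDerivAt_id t).prodMk (hasDerivAt_const t x)
    exact ((hu.differentiable one_ne_zero (t, x)).hasFDerivAt.comp_hasDerivAt t hline).deriv
  rw [h]
  exact (hu.continuous_fderiv one_ne_zero).clm_apply continuous_const

theorem continuous_pdt (hu : ContDiff ℝ 1 (Function.uncurry u)) (t : ℝ) : Continuous (pdt u t) :=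
  (continuous_uncurry_pdt hu).comp (by fun_prop : Continuous fun x : ℝ => (t, x))

theorem hasDerivAt_intervalIntegral_of_contDiff (hu : ContDiff ℝ 1 (Function.uncurry u))
    (a b t : ℝ) :
    HasDerivAt (fun s => ∫ x in a..b, u s x) (∫ x in a..b, pdt u t x) t := by
  obtain ⟨C, hC⟩ := ((isCompact_closedBall t 1).prod
    (isCompact_uIcc (a := a) (b := b))).exists_bound_of_continuousOn
      (continuous_uncurry_pdt hu).continuousOn
  exact (intervalIntegral.hasDerivAt_integral_of_dominated_loc_of_deriv_le
    (F' := pdt u) (bound := fun _ => C) (Metric.closedBall_mem_nhds t one_pos)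
    (.of_forall fun s => (contDiff_slice hu s).continuous.aestronglyMeasurable)
    ((contDiff_slice hu t).continuous.intervalIntegrable a b)
    (continuous_pdt hu t).aestronglyMeasurable
    (.of_forall fun x hx s hs => hC (s, x) ⟨hs, Set.uIoc_subset_uIcc hx⟩)
    intervalIntegrable_const
    (.of_forall fun x _ s _ => hasDerivAt_pdt hu s x)).2

theorem abs_sub_sub_deriv_mul_le {f : ℝ → ℝ} (hf : ContDiff ℝ 2 f) {M a b : ℝ}
    (hM : ∀ x ∈ Set.uIcc a b, |deriv (deriv f) x| ≤ M) :
    |f b - f a - deriv f a * (b - a)| ≤ M * ((b - a) ^ 2 / 2) := by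
  rcases eq_or_ne a b with rfl | hab
  · simp
  obtain ⟨c, hc, htaylor⟩ := taylor_mean_remainder_lagrange_iteratedDeriv (n := 1) hab
    (hf.contDiffOn.of_le (by norm_num))
  have hderiv : derivWithin f (Set.uIcc a b) a = deriv f a :=
    (hf.differentiable two_ne_zero a).derivWithin (uniqueDiffOn_uIcc hab a Set.left_mem_uIcc)
  have hremainder : f b - f a - deriv f a * (b - a) = deriv (deriv f) c * ((b - a) ^ 2 / 2) := by
    rw [iteratedDeriv_succ, iteratedDeriv_one, taylorWithinEval_succ, taylor_within_zero_eval,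
      iteratedDerivWithin_one, hderiv] at htaylor
    norm_num at htaylor
    linarith
  rw [hremainder, abs_mul, abs_of_nonneg (by positivity : (0 : ℝ) ≤ (b - a) ^ 2 / 2)]
  exact mul_le_mul_of_nonneg_right (hM c (Set.uIoo_subset_uIcc_self hc)) (by positivity)

theorem mul_sub_mul_taylor_remainder_le {f : ℝ → ℝ} (hf : ContDiff ℝ 2 f) {M p B : ℝ}
    (hM : ∀ x, |deriv (deriv f) x| ≤ M) (hp : |p| ≤ B) (a b s : ℝ) :
    s * (b - a) - p * (f b - f a - deriv f a * (b - a))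
      ≤ (M * B + 1) * ((b - a) ^ 2 / 2) + s ^ 2 / 2 := by
  have hremainder : -(p * (f b - f a - deriv f a * (b - a))) ≤ B * (M * ((b - a) ^ 2 / 2)) :=
    calc -(p * (f b - f a - deriv f a * (b - a)))
        ≤ |p| * |f b - f a - deriv f a * (b - a)| := (neg_le_abs _).trans (abs_mul _ _).le
      _ ≤ B * (M * ((b - a) ^ 2 / 2)) :=
        mul_le_mul hp (abs_sub_sub_deriv_mul_le hf fun x _ => hM x) (abs_nonneg _)
          ((abs_nonneg p).trans hp)
  linarith [two_mul_le_add_sq s (b - a)]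

theorem integral_mul_deriv_eq_neg {u v : ℝ → ℝ} (hu : ContDiff ℝ 1 u) (hv : ContDiff ℝ 1 v)
    {a b : ℝ} (hu_bdry : u a = u b) (hv_bdry : v a = v b) :
    ∫ x in a..b, u x * deriv v x = -∫ x in a..b, v x * deriv u x := by
  rw [intervalIntegral.integral_mul_deriv_eq_deriv_mul
    (fun x _ => (hu.differentiable one_ne_zero x).hasDerivAt)
    (fun x _ => (hv.differentiable one_ne_zero x).hasDerivAt)
    ((hu.continuous_deriv le_rfl).intervalIntegrable a b)
    ((hv.continuous_deriv le_rfl).intervalIntegrable a b), hu_bdry, hv_bdry]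
  simp only [sub_self, zero_sub, mul_comm]

theorem hasDerivAt_sub_mul_comp_sub_primitive {f F u v : ℝ → ℝ} {x f'u f'v u' v' : ℝ}
    (hFu : HasDerivAt F (f (u x)) (u x)) (hFv : HasDerivAt F (f (v x)) (v x))
    (hfu : HasDerivAt f f'u (u x)) (hu : HasDerivAt u u' x) (hv : HasDerivAt v v' x) :
    HasDerivAt (fun y => (u y - v y) * f (u y) - F (u y) + F (v y))
      ((u x - v x) * (f'u * u' - f'v * v')
        - v' * (f (u x) - f (v x) - f'v * (u x - v x))) x :=
  ((((hu.sub hv).mul (hfu.comp x hu)).sub (hFu.comp x hu)).add (hFv.comp x hv)).congr_deriv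
    (by simp only [Pi.sub_apply, Function.comp_apply]; ring)

theorem integral_sub_mul_deriv_comp_sub {f u v : ℝ → ℝ} (hf : ContDiff ℝ 1 f)
    (hu : ContDiff ℝ 1 u) (hv : ContDiff ℝ 1 v) {a b : ℝ}
    (hu_bdry : u a = u b) (hv_bdry : v a = v b) :
    ∫ x in a..b, (u x - v x) * (deriv (fun y => f (u y)) x - deriv (fun y => f (v y)) x)
      = ∫ x in a..b, deriv v x * (f (u x) - f (v x) - deriv f (v x) * (u x - v x)) := by
  have hf' : ∀ y, HasDerivAt f (deriv f y) y := fun y =>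
    (hf.differentiable one_ne_zero y).hasDerivAt
  have hu' : ∀ x, HasDerivAt u (deriv u x) x := fun x =>
    (hu.differentiable one_ne_zero x).hasDerivAt
  have hv' : ∀ x, HasDerivAt v (deriv v x) x := fun x =>
    (hv.differentiable one_ne_zero x).hasDerivAt
  have hfu : ∀ x, deriv (fun y => f (u y)) x = deriv f (u x) * deriv u x := fun x =>
    ((hf' (u x)).comp x (hu' x)).deriv
  have hfv : ∀ x, deriv (fun y => f (v y)) x = deriv f (v x) * deriv v x := fun x =>
    ((hf' (v x)).comp x (hv' x)).deriv
  have hF : ∀ z, HasDerivAt (fun z => ∫ s in (0 : ℝ)..z, f s) (f z) z := fun z =>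
    (hf.continuous.integral_hasStrictDerivAt 0 z).hasDerivAt
  have hf'_cont := hf.continuous_deriv le_rfl
  have hu'_cont := hu.continuous_deriv le_rfl
  have hv'_cont := hv.continuous_deriv le_rfl
  have hsub_cont := hu.continuous.sub hv.continuous
  have hflux_cont : Continuous fun x =>
      (u x - v x) * (deriv f (u x) * deriv u x - deriv f (v x) * deriv v x) :=
    hsub_cont.mul (((hf'_cont.comp hu.continuous).mul hu'_cont).sub
      ((hf'_cont.comp hv.continuous).mul hv'_cont))
  have hremainder_cont : Continuous fun x =>
      deriv v x * (f (u x) - f (v x) - deriv f (v x) * (u x - v x)) :=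
    hv'_cont.mul (((hf.continuous.comp hu.continuous).sub (hf.continuous.comp hv.continuous)).sub
      ((hf'_cont.comp hv.continuous).mul hsub_cont))
  simp only [hfu, hfv]
  -- With `F` a primitive of `f`, the integrands differ by the derivative of
  -- `(u - v) f(u) - F(u) + F(v)`, which is the same at `a` and `b`.
  rw [← sub_eq_zero, ← intervalIntegral.integral_sub (hflux_cont.intervalIntegrable a b)
      (hremainder_cont.intervalIntegrable a b),
    intervalIntegral.integral_eq_sub_of_hasDerivAt (fun x _ =>
      hasDerivAt_sub_mul_comp_sub_primitive (hF (u x)) (hF (v x)) (hf' (u x)) (hu' x) (hv' x))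
      ((hflux_cont.sub hremainder_cont).intervalIntegrable a b), hu_bdry, hv_bdry, sub_self]

end Calculus

section CouplingSign

/-- The sign `εⱼ` that couples the equation of the component `j` to the components `2 n - j - 1`
and `2 n - j` in the system of order `m = 2 n`, for the stability choice `σ₀ = (-1) ^ n`. -/
def couplingSign (n j : ℕ) : ℝ :=
  if j < n then (-1) ^ n * (-1) ^ j else (-1) ^ n * (-1) ^ (j + 2 * n - 1)

variable {n j : ℕ}

theorem couplingSign_zero (hn : 0 < n) : couplingSign n 0 = (-1) ^ n := by
  simp [couplingSign, hn]

theorem couplingSign_self (hn : 0 < n) : couplingSign n n = -1 := by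
  rw [couplingSign, if_neg (lt_irrefl n), ← pow_add]
  exact Odd.neg_one_pow (Nat.odd_iff.2 (by omega))

theorem couplingSign_reflect (hj : j < 2 * n) :
    couplingSign n (2 * n - j - 1) = couplingSign n j := by
  unfold couplingSign
  split_ifs <;> first
    | omega
    | exact congrArg _ (neg_one_pow_congr (by simp only [Nat.even_iff]; omega))

theorem couplingSign_two_mul_sub (hj₀ : 0 < j) (hj : j < 2 * n) (hjn : j ≠ n) :
    couplingSign n (2 * n - j) = -couplingSign n j := by
  unfold couplingSign
  split_ifs <;> first
    | omega
    | rw [← mul_neg, ← mul_neg_one ((-1 : ℝ) ^ _), ← pow_succ]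
      exact congrArg _ (neg_one_pow_congr (by simp only [Nat.even_iff]; omega))

theorem sum_couplingSign_mul_mul_two_mul_sub (hn : 0 < n) (w : ℕ → ℝ) :
    ∑ j ∈ Finset.Icc 1 (2 * n - 1), couplingSign n j * (w j * w (2 * n - j)) = -w n ^ 2 := by
  have hn_mem : n ∈ Finset.Icc 1 (2 * n - 1) := Finset.mem_Icc.2 (by omega)
  have hcancel : ∑ j ∈ (Finset.Icc 1 (2 * n - 1)).erase n,
      couplingSign n j * (w j * w (2 * n - j)) = 0 := by
    refine Finset.sum_involution (fun j _ => 2 * n - j) (fun j hj => ?_) (fun j hj _ => ?_)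
      (fun j hj => ?_) (fun j hj => ?_) <;>
      obtain ⟨hjn, hj₁, hj₂⟩ : j ≠ n ∧ 1 ≤ j ∧ j ≤ 2 * n - 1 := by simpa using hj
    · rw [couplingSign_two_mul_sub hj₁ (by omega) hjn, show 2 * n - (2 * n - j) = j by omega]
      ring
    · omega
    · simp only [Finset.mem_erase, Finset.mem_Icc]
      omega
    · omega
  rw [← Finset.add_sum_erase _ _ hn_mem, hcancel, couplingSign_self hn,
    show 2 * n - n = n by omega]
  ring

theorem sum_couplingSign_mul_eq_zero {a : ℕ → ℕ → ℝ}
    (ha : ∀ i < 2 * n, ∀ j < 2 * n, a i j = -a j i) :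
    ∑ j ∈ Finset.range (2 * n), couplingSign n j * a j (2 * n - j - 1) = 0 := by
  refine Finset.sum_involution (fun j _ => 2 * n - j - 1) (fun j hj => ?_) (fun j hj _ => ?_)
    (fun j hj => ?_) (fun j hj => ?_) <;> have hj' := Finset.mem_range.1 hj
  · rw [couplingSign_reflect hj', show 2 * n - (2 * n - j - 1) - 1 = j by omega,
      ha j hj' (2 * n - j - 1) (by omega)]
    ring
  · omega
  · exact Finset.mem_range.2 (by omega)
  · omega

end CouplingSign

section RelativeEnergy

/-- The density of the energy of a tuple `w` of `2 n` components. The relative energy `η(q, q̄)` is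
the integral over one period of `energyDensity n τ (q - q̄)`. -/
noncomputable def energyDensity (n : ℕ) (τ : ℝ) (w : ℕ → ℝ → ℝ → ℝ) (t x : ℝ) : ℝ :=
  w 0 t x ^ 2 / 2 + τ / 2 * ∑ j ∈ Finset.Icc 1 (2 * n - 1), w j t x ^ 2

/-- The tuple `q` is a `C¹` solution, `L`-periodic in space, of the system of order `m = 2 n` at the
times in `I`, with source `S` in the equation of the component `0`. -/
structure IsPeriodicSolutionOn (n : ℕ) (τ L : ℝ) (f : ℝ → ℝ) (S : ℝ → ℝ → ℝ) (I : Set ℝ)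
    (q : ℕ → ℝ → ℝ → ℝ) : Prop where
  contDiff : ∀ j < 2 * n, ContDiff ℝ 1 (Function.uncurry (q j))
  periodic : ∀ j < 2 * n, ∀ t, Function.Periodic (q j t) L
  evolution_zero : ∀ t ∈ I, ∀ x, pdt (q 0) t x + pdx (fun s y => f (q 0 s y)) t x
    + couplingSign n 0 * pdx (q (2 * n - 1)) t x = S t x
  evolution : ∀ j ∈ Finset.Icc 1 (2 * n - 1), ∀ t ∈ I, ∀ x,
    τ * pdt (q j) t x + couplingSign n j * pdx (q (2 * n - j - 1)) t x
      = couplingSign n j * q (2 * n - j) t x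

variable {n : ℕ} {τ L : ℝ} {f : ℝ → ℝ} {S Sb : ℝ → ℝ → ℝ} {I : Set ℝ} {q qb w : ℕ → ℝ → ℝ → ℝ}

theorem contDiff_energyDensity (hn : 0 < n) (τ : ℝ)
    (hw : ∀ j < 2 * n, ContDiff ℝ 1 (Function.uncurry (w j))) :
    ContDiff ℝ 1 (Function.uncurry (energyDensity n τ w)) := by
  have hsum : ContDiff ℝ 1 fun p : ℝ × ℝ =>
      ∑ j ∈ Finset.Icc 1 (2 * n - 1), Function.uncurry (w j) p ^ 2 :=
    ContDiff.sum fun j hj => (hw j (by grind)).pow 2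
  exact (((hw 0 (by omega)).pow 2).div_const 2).add (contDiff_const.mul hsum)

theorem pdt_energyDensity (hn : 0 < n) (τ : ℝ)
    (hw : ∀ j < 2 * n, ContDiff ℝ 1 (Function.uncurry (w j))) (t x : ℝ) :
    pdt (energyDensity n τ w) t x = w 0 t x * pdt (w 0) t x
      + ∑ j ∈ Finset.Icc 1 (2 * n - 1), w j t x * (τ * pdt (w j) t x) := by
  have hsq : ∀ j < 2 * n,
      HasDerivAt (fun s => w j s x ^ 2) (2 * w j t x * pdt (w j) t x) t := fun j hj => by
    simpa using (hasDerivAt_pdt (hw j hj) t x).fun_pow 2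
  have hderiv := ((hsq 0 (by omega)).div_const 2).add
    ((HasDerivAt.fun_sum (u := Finset.Icc 1 (2 * n - 1)) fun j hj =>
      hsq j (by grind)).const_mul (τ / 2))
  refine hderiv.deriv.trans ?_
  rw [Finset.mul_sum]
  exact congrArg₂ _ (by ring) (Finset.sum_congr rfl fun j _ => by ring)

theorem sq_div_two_le_energyDensity (n : ℕ) (hτ : 0 ≤ τ) (w : ℕ → ℝ → ℝ → ℝ) (t x : ℝ) :
    w 0 t x ^ 2 / 2 ≤ energyDensity n τ w t x :=
  le_add_of_nonneg_right (by positivity)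

theorem continuous_couplingSign_mul_deriv {w : ℕ → ℝ → ℝ} (hw : ∀ j < 2 * n, ContDiff ℝ 1 (w j))
    {j : ℕ} (hj : j < 2 * n) :
    Continuous fun x => couplingSign n j * (w j x * deriv (w (2 * n - j - 1)) x) :=
  continuous_const.mul ((hw j hj).continuous.mul
    ((hw (2 * n - j - 1) (by omega)).continuous_deriv le_rfl))

theorem integral_sum_couplingSign_mul_deriv_eq_zero {w : ℕ → ℝ → ℝ} {a b : ℝ}
    (hw : ∀ j < 2 * n, ContDiff ℝ 1 (w j)) (hw_bdry : ∀ j < 2 * n, w j a = w j b) :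
    ∫ x in a..b, ∑ j ∈ Finset.range (2 * n),
      couplingSign n j * (w j x * deriv (w (2 * n - j - 1)) x) = 0 := by
  rw [intervalIntegral.integral_finsetSum fun j hj =>
    (continuous_couplingSign_mul_deriv hw (Finset.mem_range.1 hj)).intervalIntegrable a b]
  simp only [intervalIntegral.integral_const_mul]
  exact sum_couplingSign_mul_eq_zero (a := fun i j => ∫ x in a..b, w i x * deriv (w j) x)
    fun i hi j hj => integral_mul_deriv_eq_neg (hw i hi) (hw j hj) (hw_bdry i hi) (hw_bdry j hj)

namespace IsPeriodicSolutionOn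

theorem of_low_high (hn : 0 < n) (hq : ∀ j < 2 * n, ContDiff ℝ 1 (Function.uncurry (q j)))
    (hper : ∀ j < 2 * n, ∀ t, Function.Periodic (q j t) L)
    (h_zero : ∀ t ∈ I, ∀ x, pdt (q 0) t x + pdx (fun s y => f (q 0 s y)) t x
      + (-1) ^ n * pdx (q (2 * n - 1)) t x = S t x)
    (h_low : ∀ j ∈ Finset.Icc 1 (n - 1), ∀ t ∈ I, ∀ x,
      τ * pdt (q j) t x + (-1) ^ n * (-1) ^ j * pdx (q (2 * n - j - 1)) t x
        = (-1) ^ n * (-1) ^ j * q (2 * n - j) t x)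
    (h_high : ∀ j ∈ Finset.Icc n (2 * n - 1), ∀ t ∈ I, ∀ x,
      τ * pdt (q j) t x + (-1) ^ n * (-1) ^ (j + 2 * n - 1) * pdx (q (2 * n - j - 1)) t x
        = (-1) ^ n * (-1) ^ (j + 2 * n - 1) * q (2 * n - j) t x) :
    IsPeriodicSolutionOn n τ L f S I q where
  contDiff := hq
  periodic := hper
  evolution_zero := by simpa only [couplingSign_zero hn] using h_zero
  evolution j hj t ht x := by
    obtain ⟨hj₁, hj₂⟩ := Finset.mem_Icc.1 hj
    unfold couplingSign
    split_ifs with hjn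
    · exact h_low j (Finset.mem_Icc.2 ⟨hj₁, by omega⟩) t ht x
    · exact h_high j (Finset.mem_Icc.2 ⟨not_lt.1 hjn, hj₂⟩) t ht x

theorem contDiff_sub (hq : IsPeriodicSolutionOn n τ L f S I q)
    (hqb : IsPeriodicSolutionOn n τ L f Sb I qb) {j : ℕ} (hj : j < 2 * n) :
    ContDiff ℝ 1 (Function.uncurry ((q - qb) j)) :=
  (hq.contDiff j hj).sub (hqb.contDiff j hj)

theorem evolution_zero_sub (hn : 0 < n) (hq : IsPeriodicSolutionOn n τ L f S I q)
    (hqb : IsPeriodicSolutionOn n τ L f Sb I qb) {t : ℝ} (ht : t ∈ I) (x : ℝ) :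
    pdt ((q - qb) 0) t x + (pdx (fun s y => f (q 0 s y)) t x - pdx (fun s y => f (qb 0 s y)) t x)
      + couplingSign n 0 * pdx ((q - qb) (2 * n - 1)) t x = S t x - Sb t x := by
  simp only [Pi.sub_apply q qb]
  rw [pdt_sub (hq.contDiff 0 (by omega)) (hqb.contDiff 0 (by omega)),
    pdx_sub (hq.contDiff _ (by omega)) (hqb.contDiff _ (by omega))]
  linear_combination hq.evolution_zero t ht x - hqb.evolution_zero t ht x

theorem evolution_sub (hq : IsPeriodicSolutionOn n τ L f S I q)
    (hqb : IsPeriodicSolutionOn n τ L f Sb I qb) {t : ℝ} (ht : t ∈ I) {j : ℕ}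
    (hj : j ∈ Finset.Icc 1 (2 * n - 1)) (x : ℝ) :
    τ * pdt ((q - qb) j) t x = couplingSign n j
      * ((q - qb) (2 * n - j) t x - pdx ((q - qb) (2 * n - j - 1)) t x) := by
  simp only [Pi.sub_apply]
  rw [pdt_sub (hq.contDiff j (by grind)) (hqb.contDiff j (by grind)),
    pdx_sub (hq.contDiff _ (by grind)) (hqb.contDiff _ (by grind))]
  linear_combination hq.evolution j hj t ht x - hqb.evolution j hj t ht x

theorem integral_transport_sub_eq_zero (hq : IsPeriodicSolutionOn n τ L f S I q)
    (hqb : IsPeriodicSolutionOn n τ L f Sb I qb) (t : ℝ) :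
    ∫ x in (0 : ℝ)..L, ∑ j ∈ Finset.range (2 * n), couplingSign n j
      * ((q - qb) j t x * pdx ((q - qb) (2 * n - j - 1)) t x) = 0 :=
  integral_sum_couplingSign_mul_deriv_eq_zero (w := fun j => (q - qb) j t)
    (fun _ hj => contDiff_slice (hq.contDiff_sub hqb hj) t)
    fun j hj => ((hq.periodic j hj t).sub (hqb.periodic j hj t)).eq.symm

theorem integral_flux_sub (hn : 0 < n) (hf : ContDiff ℝ 1 f)
    (hq : IsPeriodicSolutionOn n τ L f S I q) (hqb : IsPeriodicSolutionOn n τ L f Sb I qb)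
    (t : ℝ) :
    ∫ x in (0 : ℝ)..L, (q - qb) 0 t x
        * (pdx (fun s y => f (q 0 s y)) t x - pdx (fun s y => f (qb 0 s y)) t x)
      = ∫ x in (0 : ℝ)..L, pdx (qb 0) t x
          * (f (q 0 t x) - f (qb 0 t x) - deriv f (qb 0 t x) * (q 0 t x - qb 0 t x)) :=
  integral_sub_mul_deriv_comp_sub hf
    (contDiff_slice (hq.contDiff 0 (by omega)) t) (contDiff_slice (hqb.contDiff 0 (by omega)) t)
    (hq.periodic 0 (by omega) t).eq.symm (hqb.periodic 0 (by omega) t).eq.symm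

theorem pdt_energyDensity_sub_add_sq (hn : 0 < n) (hq : IsPeriodicSolutionOn n τ L f S I q)
    (hqb : IsPeriodicSolutionOn n τ L f Sb I qb) {t : ℝ} (ht : t ∈ I) (x : ℝ) :
    pdt (energyDensity n τ (q - qb)) t x + (q - qb) n t x ^ 2
      = (S t x - Sb t x) * (q - qb) 0 t x
        - (q - qb) 0 t x
          * (pdx (fun s y => f (q 0 s y)) t x - pdx (fun s y => f (qb 0 s y)) t x)
        - ∑ j ∈ Finset.range (2 * n), couplingSign n j
            * ((q - qb) j t x * pdx ((q - qb) (2 * n - j - 1)) t x) := by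
  have hcoupling : ∑ j ∈ Finset.Icc 1 (2 * n - 1), (q - qb) j t x * (τ * pdt ((q - qb) j) t x)
      = -(q - qb) n t x ^ 2 - ∑ j ∈ Finset.Icc 1 (2 * n - 1), couplingSign n j
          * ((q - qb) j t x * pdx ((q - qb) (2 * n - j - 1)) t x) := by
    rw [← sum_couplingSign_mul_mul_two_mul_sub hn fun j => (q - qb) j t x,
      ← Finset.sum_sub_distrib]
    refine Finset.sum_congr rfl fun j hj => ?_
    rw [hq.evolution_sub hqb ht hj]
    ring
  rw [pdt_energyDensity hn τ (fun j => hq.contDiff_sub hqb), hcoupling,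
    Finset.sum_range_eq_add_Ico _ (by omega),
    ← Finset.Icc_sub_one_right_eq_Ico_of_not_isMin
      (not_isMin_of_lt (by omega : 0 < 2 * n)), Nat.sub_zero]
  linear_combination (q - qb) 0 t x * hq.evolution_zero_sub hn hqb ht x

theorem integral_pdt_energyDensity_sub_add_integral_sq (hn : 0 < n) (hf : ContDiff ℝ 1 f)
    (hq : IsPeriodicSolutionOn n τ L f S I q) (hqb : IsPeriodicSolutionOn n τ L f Sb I qb)
    {t : ℝ} (ht : t ∈ I) (hS : Continuous fun x => S t x - Sb t x) :
    (∫ x in (0 : ℝ)..L, pdt (energyDensity n τ (q - qb)) t x)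
        + ∫ x in (0 : ℝ)..L, (q - qb) n t x ^ 2
      = (∫ x in (0 : ℝ)..L, (S t x - Sb t x) * (q - qb) 0 t x)
        - ∫ x in (0 : ℝ)..L, pdx (qb 0) t x
          * (f (q 0 t x) - f (qb 0 t x) - deriv f (qb 0 t x) * (q 0 t x - qb 0 t x)) := by
  have hw : ∀ j < 2 * n, ContDiff ℝ 1 ((q - qb) j t) := fun j hj =>
    contDiff_slice (hq.contDiff_sub hqb hj) t
  have henergy_cont : Continuous (pdt (energyDensity n τ (q - qb)) t) :=
    continuous_pdt (contDiff_energyDensity hn τ fun j => hq.contDiff_sub hqb) t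
  have hdissipation_cont : Continuous fun x => (q - qb) n t x ^ 2 :=
    (hw n (by omega)).continuous.pow 2
  have hsource_cont : Continuous fun x => (S t x - Sb t x) * (q - qb) 0 t x :=
    hS.mul (hw 0 (by omega)).continuous
  have hflux_cont : Continuous fun x => (q - qb) 0 t x
      * (pdx (fun s y => f (q 0 s y)) t x - pdx (fun s y => f (qb 0 s y)) t x) :=
    (hw 0 (by omega)).continuous.mul
      ((continuous_pdx (u := fun s y => f (q 0 s y)) (hf.comp (hq.contDiff 0 (by omega))) t).sub
        (continuous_pdx (u := fun s y => f (qb 0 s y)) (hf.comp (hqb.contDiff 0 (by omega))) t))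
  have htransport_cont : Continuous fun x => ∑ j ∈ Finset.range (2 * n), couplingSign n j
      * ((q - qb) j t x * pdx ((q - qb) (2 * n - j - 1)) t x) :=
    continuous_finsetSum _ fun j hj => continuous_couplingSign_mul_deriv hw (Finset.mem_range.1 hj)
  rw [← intervalIntegral.integral_add (henergy_cont.intervalIntegrable 0 L)
    (hdissipation_cont.intervalIntegrable 0 L)]
  simp only [hq.pdt_energyDensity_sub_add_sq hn hqb ht]
  rw [intervalIntegral.integral_sub ((hsource_cont.fun_sub hflux_cont).intervalIntegrable 0 L)
      (htransport_cont.intervalIntegrable 0 L),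
    intervalIntegral.integral_sub (hsource_cont.intervalIntegrable 0 L)
      (hflux_cont.intervalIntegrable 0 L),
    hq.integral_transport_sub_eq_zero hqb, hq.integral_flux_sub hn hf hqb, sub_zero]

theorem integral_pdt_energyDensity_sub_le (hn : 0 < n) (hτ : 0 ≤ τ) (hL : 0 ≤ L)
    (hf : ContDiff ℝ 2 f) {M B : ℝ} (hM : ∀ y, |deriv (deriv f) y| ≤ M)
    (hq : IsPeriodicSolutionOn n τ L f S I q) (hqb : IsPeriodicSolutionOn n τ L f Sb I qb)
    {t : ℝ} (ht : t ∈ I) (hB : ∀ x, |pdx (qb 0) t x| ≤ B)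
    (hS : Continuous fun x => S t x - Sb t x) :
    (∫ x in (0 : ℝ)..L, pdt (energyDensity n τ (q - qb)) t x)
        + ∫ x in (0 : ℝ)..L, (q - qb) n t x ^ 2
      ≤ (M * B + 1) * (∫ x in (0 : ℝ)..L, energyDensity n τ (q - qb) t x)
        + (∫ x in (0 : ℝ)..L, (S t x - Sb t x) ^ 2) / 2 := by
  have hq₀ := contDiff_slice (hq.contDiff 0 (by omega)) t
  have hqb₀ := contDiff_slice (hqb.contDiff 0 (by omega)) t
  have henergy := contDiff_energyDensity hn τ fun j => hq.contDiff_sub hqb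
  have hf'_cont := hf.continuous_deriv one_le_two
  have hsource_cont : Continuous fun x => (S t x - Sb t x) * (q - qb) 0 t x :=
    hS.mul (hq₀.continuous.sub hqb₀.continuous)
  have hremainder_cont : Continuous fun x => pdx (qb 0) t x
      * (f (q 0 t x) - f (qb 0 t x) - deriv f (qb 0 t x) * (q 0 t x - qb 0 t x)) :=
    (hqb₀.continuous_deriv le_rfl).mul
      (((hf.continuous.comp hq₀.continuous).sub (hf.continuous.comp hqb₀.continuous)).sub
        ((hf'_cont.comp hqb₀.continuous).mul (hq₀.continuous.sub hqb₀.continuous)))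
  have hMB : 0 ≤ M * B + 1 := by
    have := mul_nonneg ((abs_nonneg _).trans (hM 0)) ((abs_nonneg _).trans (hB 0))
    linarith
  have hbound_energy_cont : Continuous fun x => (M * B + 1) * energyDensity n τ (q - qb) t x :=
    continuous_const.mul (contDiff_slice henergy t).continuous
  have hbound_source_cont : Continuous fun x => (S t x - Sb t x) ^ 2 / 2 := (hS.pow 2).div_const 2
  rw [hq.integral_pdt_energyDensity_sub_add_integral_sq hn (hf.of_le one_le_two) hqb ht hS,
    ← intervalIntegral.integral_sub (hsource_cont.intervalIntegrable 0 L)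
      (hremainder_cont.intervalIntegrable 0 L),
    ← intervalIntegral.integral_const_mul, ← intervalIntegral.integral_div,
    ← intervalIntegral.integral_add (hbound_energy_cont.intervalIntegrable 0 L)
      (hbound_source_cont.intervalIntegrable 0 L)]
  refine intervalIntegral.integral_mono hL
    ((hsource_cont.sub hremainder_cont).intervalIntegrable 0 L)
    ((hbound_energy_cont.add hbound_source_cont).intervalIntegrable 0 L) fun x => ?_
  have henergy_le := mul_le_mul_of_nonneg_left
    (sq_div_two_le_energyDensity n hτ (q - qb) t x) hMB
  have hpoint := mul_sub_mul_taylor_remainder_le hf hM (hB x) (qb 0 t x) (q 0 t x)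
    (S t x - Sb t x)
  exact hpoint.trans (add_le_add_left henergy_le _)

end IsPeriodicSolutionOn

end RelativeEnergy

/-- Relative energy inequality for the generalized even-order hyperbolic
approximation of `∂_t u + ∂_x f(u) + σ₀ ∂_x^m u = 0` with `σ₀ = (-1)^(m/2)`:
if `q` solves the system and `q̄` solves it with a residual `τ R` in the first
equation, then
`d/dt η(q, q̄) + ∫₀^L (q_{m/2} - q̄_{m/2})² dx
  ≤ (‖f″‖_∞ · sup|∂_x q̄₀| + 1) η(q, q̄) + τ² ∫₀^L R² dx`. -/
theorem even_order_relative_energy_inequality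
    (m : ℕ) (hm : Even m) (hm2 : 2 ≤ m)
    (σ₀ : ℝ) (hσ : σ₀ = (-1 : ℝ) ^ (m / 2))
    (L T τ : ℝ) (hL : 0 < L) (hT : 0 < T) (hτ : 0 < τ)
    (f : ℝ → ℝ) (hf : ContDiff ℝ 2 f)
    (Mf : ℝ) (hMf : ∀ x : ℝ, |deriv (deriv f) x| ≤ Mf)
    (q qb : ℕ → ℝ → ℝ → ℝ) (R : ℝ → ℝ → ℝ)
    (hq : ∀ j < m, ContDiff ℝ 1 (Function.uncurry (q j)))
    (hqb : ∀ j < m, ContDiff ℝ 1 (Function.uncurry (qb j)))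
    (hR : Continuous (Function.uncurry R))
    (hper : ∀ j < m, ∀ t, Function.Periodic (q j t) L)
    (hperb : ∀ j < m, ∀ t, Function.Periodic (qb j t) L)
    (B : ℝ) (hB : ∀ t x : ℝ, |pdx (qb 0) t x| ≤ B)
    (heq₀ : ∀ t ∈ Set.Icc (0:ℝ) T, ∀ x : ℝ,
      pdt (q 0) t x + pdx (fun s y => f (q 0 s y)) t x
        + σ₀ * pdx (q (m - 1)) t x = 0)
    (heqlow : ∀ j ∈ Finset.Icc 1 (m / 2 - 1), ∀ t ∈ Set.Icc (0:ℝ) T, ∀ x : ℝ,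
      τ * pdt (q j) t x + σ₀ * (-1 : ℝ) ^ j * pdx (q (m - j - 1)) t x
        = σ₀ * (-1 : ℝ) ^ j * q (m - j) t x)
    (heqhigh : ∀ j ∈ Finset.Icc (m / 2) (m - 1), ∀ t ∈ Set.Icc (0:ℝ) T, ∀ x : ℝ,
      τ * pdt (q j) t x + σ₀ * (-1 : ℝ) ^ (j + m - 1) * pdx (q (m - j - 1)) t x
        = σ₀ * (-1 : ℝ) ^ (j + m - 1) * q (m - j) t x)
    (heqb₀ : ∀ t ∈ Set.Icc (0:ℝ) T, ∀ x : ℝ,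
      pdt (qb 0) t x + pdx (fun s y => f (qb 0 s y)) t x
        + σ₀ * pdx (qb (m - 1)) t x = τ * R t x)
    (heqblow : ∀ j ∈ Finset.Icc 1 (m / 2 - 1), ∀ t ∈ Set.Icc (0:ℝ) T, ∀ x : ℝ,
      τ * pdt (qb j) t x + σ₀ * (-1 : ℝ) ^ j * pdx (qb (m - j - 1)) t x
        = σ₀ * (-1 : ℝ) ^ j * qb (m - j) t x)
    (heqbhigh : ∀ j ∈ Finset.Icc (m / 2) (m - 1), ∀ t ∈ Set.Icc (0:ℝ) T, ∀ x : ℝ,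
      τ * pdt (qb j) t x + σ₀ * (-1 : ℝ) ^ (j + m - 1) * pdx (qb (m - j - 1)) t x
        = σ₀ * (-1 : ℝ) ^ (j + m - 1) * qb (m - j) t x) :
    ∀ t ∈ Set.Icc (0:ℝ) T, ∃ d : ℝ,
      HasDerivWithinAt
        (fun s => ∫ x in (0:ℝ)..L,
          ((q 0 s x - qb 0 s x) ^ 2 / 2
            + τ / 2 * ∑ j ∈ Finset.Icc 1 (m - 1), (q j s x - qb j s x) ^ 2))
        d (Set.Icc (0:ℝ) T) t ∧
      d + (∫ x in (0:ℝ)..L, (q (m / 2) t x - qb (m / 2) t x) ^ 2)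
        ≤ (Mf * B + 1) *
            (∫ x in (0:ℝ)..L,
              ((q 0 t x - qb 0 t x) ^ 2 / 2
                + τ / 2 * ∑ j ∈ Finset.Icc 1 (m - 1), (q j t x - qb j t x) ^ 2))
          + τ ^ 2 * ∫ x in (0:ℝ)..L, R t x ^ 2 := by
  intro t ht
  obtain ⟨n, rfl⟩ := hm.two_dvd
  rw [Nat.mul_div_cancel_left n two_pos] at hσ heqlow heqhigh heqblow heqbhigh ⊢
  subst hσ
  have hn : 0 < n := by omega
  have hsol : IsPeriodicSolutionOn n τ L f 0 (Set.Icc 0 T) q :=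
    .of_low_high hn hq hper heq₀ heqlow heqhigh
  have hsolb : IsPeriodicSolutionOn n τ L f (fun s x => τ * R s x) (Set.Icc 0 T) qb :=
    .of_low_high hn hqb hperb heqb₀ heqblow heqbhigh
  have hR_cont : Continuous (R t) := hR.comp (by fun_prop : Continuous fun x : ℝ => (t, x))
  have hsource : ∫ x in (0 : ℝ)..L, ((0 : ℝ → ℝ → ℝ) t x - τ * R t x) ^ 2
      = τ ^ 2 * ∫ x in (0 : ℝ)..L, R t x ^ 2 := by
    simp [mul_pow]
  have hsource_nonneg : 0 ≤ τ ^ 2 * ∫ x in (0 : ℝ)..L, R t x ^ 2 :=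
    mul_nonneg (sq_nonneg τ) (intervalIntegral.integral_nonneg hL.le fun x _ => sq_nonneg _)
  have hle := hsol.integral_pdt_energyDensity_sub_le hn hτ.le hL.le hf hMf hsolb ht (hB t)
    (continuous_const.sub (continuous_const.mul hR_cont))
  rw [hsource] at hle
  exact ⟨_, (hasDerivAt_intervalIntegral_of_contDiff (contDiff_energyDensity hn τ fun _ =>
    hsol.contDiff_sub hsolb) 0 L t).hasDerivWithinAt,
    hle.trans (add_le_add_right (half_le_self hsource_nonneg) _)⟩
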